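/- Consider the coordination game without bonuses on the partition-cycle with nodes V = {1,…,8}, cyclic edges E_c = {1→2, 2→3, 3→4, 4→5, 5→6, 6→7, 7→8, 8→1}, cross-edges E_p = {1→6, 2→6, 3→8, 4→7}, colour sets C(1) = {b,c}, C(2) = {b,c}, C(3) = {b}, C(4) = {c}, C(5) = {a}, C(6) = {a,b}, C(7) = {a,c}, C(8) = {b,c} for three distinct colours a, b, c, and weights equal to 2 on the edges 6 → 7 and 7 → 8 and equal to 1 on all other edges. This game has no Nash equilibrium. -/

import Mathlib

open scoped Classical

namespace CG

/-- Payoff of node `i` in a coordination game on a weighted directed graph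
with adjacency `adj` (an edge `j → i` is `adj j i`), edge weights `w`,
bonuses `β`, under the joint strategy `s`. -/
noncomputable def payoff {V M : Type} [Fintype V] (adj : V → V → Prop)
    (w : V → V → ℝ) (β : V → M → ℕ) (s : V → M) (i : V) : ℝ :=
  (∑ j ∈ Finset.univ.filter (fun j => adj j i ∧ s j = s i), w j i) + (β i (s i) : ℝ)

/-- A joint strategy assigns to every node a colour from its colour set. -/
def Valid {V M : Type} (C : V → Finset M) (s : V → M) : Prop :=
  ∀ i, s i ∈ C i

/-- `s'` is a profitable deviation of the (non-empty) coalition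
`K = {i | s i ≠ s' i}` from `s`. -/
def ProfDev {V M : Type} [Fintype V] (adj : V → V → Prop) (w : V → V → ℝ)
    (β : V → M → ℕ) (C : V → Finset M) (s s' : V → M) : Prop :=
  Valid C s' ∧ s ≠ s' ∧
    ∀ i, s i ≠ s' i → payoff adj w β s i < payoff adj w β s' i

/-- A profitable deviation of a single player. -/
def UniDev {V M : Type} [Fintype V] (adj : V → V → Prop) (w : V → V → ℝ)
    (β : V → M → ℕ) (C : V → Finset M) (s s' : V → M) : Prop :=
  ProfDev adj w β C s s' ∧ ∃ i, ∀ j, j ≠ i → s j = s' j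

/-- A Nash equilibrium: no single player has a profitable deviation. -/
def IsNash {V M : Type} [Fintype V] (adj : V → V → Prop) (w : V → V → ℝ)
    (β : V → M → ℕ) (C : V → Finset M) (s : V → M) : Prop :=
  Valid C s ∧ ∀ s', ¬ UniDev adj w β C s s'

/-- A strong equilibrium: no coalition has a profitable deviation. -/
def IsStrong {V M : Type} [Fintype V] (adj : V → V → Prop) (w : V → V → ℝ)
    (β : V → M → ℕ) (C : V → Finset M) (s : V → M) : Prop :=
  Valid C s ∧ ∀ s', ¬ ProfDev adj w β C s s'

/-- There is a finite improvement path of length `L` starting at `s`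
(each step a profitable single-player deviation) ending in a Nash equilibrium. -/
def ImpPath {V M : Type} [Fintype V] (adj : V → V → Prop) (w : V → V → ℝ)
    (β : V → M → ℕ) (C : V → Finset M) (s : V → M) (L : ℕ) : Prop :=
  ∃ σ : ℕ → V → M, σ 0 = s ∧
    (∀ t, t < L → UniDev adj w β C (σ t) (σ (t + 1))) ∧
    IsNash adj w β C (σ L)

/-- There is a finite c-improvement path of length `L` starting at `s`
(each step a profitable coalition deviation) ending in a strong equilibrium. -/
def CImpPath {V M : Type} [Fintype V] (adj : V → V → Prop) (w : V → V → ℝ)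
    (β : V → M → ℕ) (C : V → Finset M) (s : V → M) (L : ℕ) : Prop :=
  ∃ σ : ℕ → V → M, σ 0 = s ∧
    (∀ t, t < L → ProfDev adj w β C (σ t) (σ (t + 1))) ∧
    IsStrong adj w β C (σ L)

/-- Adjacency of the simple cycle `1 → 2 → ⋯ → n → 1` on `Fin n`. -/
def cycAdj (n : ℕ) : Fin n → Fin n → Prop :=
  fun i j => (i.val + 1) % n = j.val

/-- Adjacency of a partition-cycle on `Fin n`: the cyclic edges
`i → i+1 (mod n)` together with the cross-edges `Ep`. -/
def pcAdj (n : ℕ) (Ep : Finset (Fin n × Fin n)) : Fin n → Fin n → Prop :=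
  fun i j => (i.val + 1) % n = j.val ∨ (i, j) ∈ Ep

/-- A partition-cycle on `Fin n` with top part `V_T = {i | i.val < k}`
(of size `k`, `1 ≤ k < n`) and bottom part `V_B = {i | k ≤ i.val}`:
the cross-edges `Ep` go from `V_T` to `V_B` and are not cyclic edges. -/
def IsPartitionCycle (n k : ℕ) (Ep : Finset (Fin n × Fin n)) : Prop :=
  1 ≤ k ∧ k < n ∧
  (∀ e ∈ Ep, e.1.val < k ∧ k ≤ e.2.val) ∧
  (∀ e ∈ Ep, (e.1.val + 1) % n ≠ e.2.val)

/-- The cross-edges of Example 7 (`0`-based labels: paper node `i` is `i - 1`):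
`1 → 6, 2 → 6, 3 → 8, 4 → 7`. -/
def crossEx19 : Finset (Fin 8 × Fin 8) :=
  {(0, 5), (1, 5), (2, 7), (3, 6)}

/-- Weights of Example 7: `2` on the edges `6 → 7` and `7 → 8`, `1` elsewhere. -/
noncomputable def weightEx19 : Fin 8 → Fin 8 → ℝ := fun i j =>
  if (i, j) ∈ ({(5, 6), (6, 7)} : Finset (Fin 8 × Fin 8)) then 2 else 1

/-- Colour sets of Example 7: `C(1) = {b,c}`, `C(2) = {b,c}`, `C(3) = {b}`,
`C(4) = {c}`, `C(5) = {a}`, `C(6) = {a,b}`, `C(7) = {a,c}`, `C(8) = {b,c}`. -/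
def colEx19 {M : Type} [DecidableEq M] (a b c : M) : Fin 8 → Finset M := fun i =>
  if i = 0 then {b, c} else if i = 1 then {b, c} else if i = 2 then {b}
    else if i = 3 then {c} else if i = 4 then {a} else if i = 5 then {a, b}
    else if i = 6 then {a, c} else {b, c}

theorem payoff_ex19 {M : Type} (s : Fin 8 → M) (i : Fin 8) :
    payoff (pcAdj 8 crossEx19) weightEx19 (fun _ _ => 0) s i =
      ∑ j : Fin 8, if (pcAdj 8 crossEx19 j i ∧ s j = s i) then weightEx19 j i else 0 := by
  simp [payoff, Finset.sum_filter]

theorem pay0 {M : Type} (s : Fin 8 → M) :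
    payoff (pcAdj 8 crossEx19) weightEx19 (fun _ _ => 0) s 0 = if s 7 = s 0 then 1 else 0 := by
  rw [payoff_ex19, Fin.sum_univ_eight]
  simp [pcAdj, crossEx19, weightEx19]

theorem pay1 {M : Type} (s : Fin 8 → M) :
    payoff (pcAdj 8 crossEx19) weightEx19 (fun _ _ => 0) s 1 = if s 0 = s 1 then 1 else 0 := by
  rw [payoff_ex19, Fin.sum_univ_eight]
  simp [pcAdj, crossEx19, weightEx19]

theorem pay5 {M : Type} (s : Fin 8 → M) :
    payoff (pcAdj 8 crossEx19) weightEx19 (fun _ _ => 0) s 5 =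
      (if s 0 = s 5 then 1 else 0) + (if s 1 = s 5 then 1 else 0) +
        (if s 4 = s 5 then 1 else 0) := by
  rw [payoff_ex19, Fin.sum_univ_eight]
  simp [pcAdj, crossEx19, weightEx19]

theorem pay6 {M : Type} (s : Fin 8 → M) :
    payoff (pcAdj 8 crossEx19) weightEx19 (fun _ _ => 0) s 6 =
      (if s 3 = s 6 then 1 else 0) + (if s 5 = s 6 then 2 else 0) := by
  rw [payoff_ex19, Fin.sum_univ_eight]
  simp [pcAdj, crossEx19, weightEx19]

theorem pay7 {M : Type} (s : Fin 8 → M) :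
    payoff (pcAdj 8 crossEx19) weightEx19 (fun _ _ => 0) s 7 =
      (if s 2 = s 7 then 1 else 0) + (if s 6 = s 7 then 2 else 0) := by
  rw [payoff_ex19, Fin.sum_univ_eight]
  simp [pcAdj, crossEx19, weightEx19]

/-- The coordination game without bonuses on the partition-cycle of Example 7
(with distinct colours `a, b, c`, cyclic edges `1 → 2 → ⋯ → 8 → 1`,
cross-edges `1 → 6, 2 → 6, 3 → 8, 4 → 7`, and weight `2` on the edges
`6 → 7` and `7 → 8`, weight `1` elsewhere) has no Nash equilibrium: in every
joint strategy some player can strictly improve by switching to another of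
his colours. -/
theorem partition_cycle_weighted_no_nash
    {M : Type} [Fintype M] [DecidableEq M] (a b c : M)
    (hab : a ≠ b) (hbc : b ≠ c) (hac : a ≠ c) :
    ∀ s : Fin 8 → M, Valid (colEx19 a b c) s →
      ∃ i : Fin 8, ∃ d ∈ colEx19 a b c i,
        payoff (pcAdj 8 crossEx19) weightEx19 (fun _ _ => 0) s i <
          payoff (pcAdj 8 crossEx19) weightEx19 (fun _ _ => 0)
            (Function.update s i d) i := by
  intro s hs
  by_contra hcon
  push Not at hcon
  have v0 := hs 0
  have v1 := hs 1
  have v2 := hs 2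
  have v3 := hs 3
  have v4 := hs 4
  have v5 := hs 5
  have v6 := hs 6
  have v7 := hs 7
  have e0 := fun d => hcon 0 d
  have e1 := fun d => hcon 1 d
  have e5 := fun d => hcon 5 d
  have e6 := fun d => hcon 6 d
  have e7 := fun d => hcon 7 d
  clear hcon hs
  simp only [pay0, pay1, pay5, pay6, pay7] at e0 e1 e5 e6 e7
  simp [colEx19] at v0 v1 v2 v3 v4 v5 v6 v7 e0 e1 e5 e6 e7
  have hba := hab.symm
  have hcb := hbc.symm
  have hca := hac.symm
  rw [v4] at e5
  rw [v3] at e6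
  rw [v2] at e7
  clear v2 v3 v4
  have n : ¬ ((1 : ℝ) + 1 ≤ 1) := by norm_num
  rcases v6 with h6 | h6 <;> rcases v7 with h7 | h7 <;> simp_all <;>
  rcases v0 with h0 | h0 <;> simp_all <;>
  rcases v1 with h1 | h1 <;> simp_all <;>
  rcases v5 with h5 | h5 <;> simp_all <;> norm_num at *

end CG
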